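/- arXiv:1408.5200 — 3 statements merged into one kernel-verified Lean document; each statement's English description precedes it below -/
import Mathlib

section
/- Let T̂(z) be the N-site reflection monodromy matrix over a commutative ℂ-algebra R. Then T̂(−z) = −σ₃ T̂(z) σ₃⁻¹ and T̂(z⁻¹)ᵗ = σ₂ T̂(z) σ₂⁻¹, where σ₂ = [[0,−1],[1,0]], σ₃ = [[1,0],[0,−1]]. Equivalently, the paper's monodromy matrix T(z) = (z−z⁻¹)⁻¹T̂(z) satisfies T(−z) = σ₃T(z)σ₃⁻¹ and T(z⁻¹)ᵗ = −σ₂T(z)σ₂⁻¹. -/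
/-!
Conjugation by `σ₃` turns `L(u)` into `-L(-u)` and `K(z)` into `-K(-z)`; conjugation by `σ₂` turns
`L(u)` into `-L(u⁻¹)ᵗ` and `K(z)` into `K(z⁻¹)ᵗ`. Each site contributes exactly two Lax matrices
to `T̂(z)`, so their signs cancel and only the sign of `K` survives. Since conjugation is
multiplicative and transposition exchanges the two rows `L₁(a₁z)⋯L_N(a_N z)` and
`L_N(z/a_N)⋯L₁(z/a₁)`, the local symmetries pass to `T̂(z)`.
-/

open LaurentPolynomial

noncomputable section

/-- The local Lax matrix `L(u) = [[u k − u⁻¹ k⁻¹, e], [f, u k⁻¹ − u⁻¹ k]]` of the XXZ chain,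
as a 2×2 matrix over the Laurent polynomial ring `R[z,z⁻¹]`; the argument `v` stands for the
inverse `u⁻¹` of the unit `u`. -/
noncomputable def lax {R : Type} [CommRing R] (e f k kinv : R)
    (u v : LaurentPolynomial R) : Matrix (Fin 2) (Fin 2) (LaurentPolynomial R) :=
  !![u * C k - v * C kinv, C e; C f, u * C kinv - v * C k]

/-- The diagonal reflection matrix `K(z) = diag(ξz − ξ⁻¹z⁻¹, ξz⁻¹ − ξ⁻¹z)`, where `v` stands
for `z⁻¹`. -/
noncomputable def refK {R : Type} [CommRing R] [Algebra ℂ R] (ξ : ℂ)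
    (u v : LaurentPolynomial R) : Matrix (Fin 2) (Fin 2) (LaurentPolynomial R) :=
  !![algebraMap ℂ (LaurentPolynomial R) ξ * u - algebraMap ℂ (LaurentPolynomial R) ξ⁻¹ * v, 0;
     0, algebraMap ℂ (LaurentPolynomial R) ξ * v - algebraMap ℂ (LaurentPolynomial R) ξ⁻¹ * u]

/-- The reflection monodromy matrix
`T̂(z) = L₁(a₁z)⋯L_N(a_N z)·K(z)·L_N(z/a_N)⋯L₁(z/a₁)`, evaluated at a general unit `u`
(with `v` standing for `u⁻¹`). -/
noncomputable def thatGen {R : Type} [CommRing R] [Algebra ℂ R] (N : ℕ)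
    (e f k kinv : Fin N → R) (ξ : ℂ) (a : Fin N → ℂ) (u v : LaurentPolynomial R) :
    Matrix (Fin 2) (Fin 2) (LaurentPolynomial R) :=
  (List.ofFn fun i => lax (e i) (f i) (k i) (kinv i)
      (algebraMap ℂ (LaurentPolynomial R) (a i) * u)
      (algebraMap ℂ (LaurentPolynomial R) (a i)⁻¹ * v)).prod
  * refK ξ u v *
  ((List.ofFn fun i => lax (e i) (f i) (k i) (kinv i)
      (algebraMap ℂ (LaurentPolynomial R) (a i)⁻¹ * u)
      (algebraMap ℂ (LaurentPolynomial R) (a i) * v)).reverse).prod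

/-- The reflection monodromy matrix `T̂(z)` at `u = z`. -/
noncomputable def That {R : Type} [CommRing R] [Algebra ℂ R] (N : ℕ)
    (e f k kinv : Fin N → R) (ξ : ℂ) (a : Fin N → ℂ) :
    Matrix (Fin 2) (Fin 2) (LaurentPolynomial R) :=
  thatGen N e f k kinv ξ a (T 1) (T (-1))

/-- The double-row product `F₁ ⋯ F_N · K · G_N ⋯ G₁`, which is the shape of `T̂(z)`. -/
def doubleRow {A : Type*} [Monoid A] {N : ℕ} (F G : Fin N → A) (K : A) : A :=
  (List.ofFn F).prod * K * (List.ofFn G).reverse.prod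

section DoubleRow

variable {A : Type*} {N : ℕ}

theorem doubleRow_zero [Monoid A] (F G : Fin 0 → A) (K : A) : doubleRow F G K = K := by
  simp [doubleRow]

theorem doubleRow_succ [Monoid A] (F G : Fin (N + 1) → A) (K : A) :
    doubleRow F G K = F 0 * doubleRow (Fin.tail F) (Fin.tail G) K * G 0 := by
  simp [doubleRow, Fin.tail_def, List.ofFn_succ, mul_assoc]

theorem doubleRow_neg_neg [Monoid A] [HasDistribNeg A] (F G : Fin N → A) (K : A) :
    doubleRow (-F) (-G) K = doubleRow F G K := by
  induction N with
  | zero => simp only [doubleRow_zero]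
  | succ N ih =>
    have ih_tail : doubleRow (Fin.tail (-F)) (Fin.tail (-G)) K =
        doubleRow (Fin.tail F) (Fin.tail G) K := ih (Fin.tail F) (Fin.tail G)
    simp only [doubleRow_succ, ih_tail, Pi.neg_apply, neg_mul, mul_neg, neg_neg]

theorem doubleRow_neg_right [Monoid A] [HasDistribNeg A] (F G : Fin N → A) (K : A) :
    doubleRow F G (-K) = -doubleRow F G K := by
  simp only [doubleRow, mul_neg, neg_mul]

theorem semiconjBy_doubleRow [Monoid A] {s K K' : A} {F F' G G' : Fin N → A}
    (hF : ∀ i, SemiconjBy s (F i) (F' i)) (hG : ∀ i, SemiconjBy s (G i) (G' i))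
    (hK : SemiconjBy s K K') :
    SemiconjBy s (doubleRow F G K) (doubleRow F' G' K') := by
  induction N with
  | zero => simpa only [doubleRow_zero] using hK
  | succ N ih =>
    simp only [doubleRow_succ]
    have h_tail : SemiconjBy s (doubleRow (Fin.tail F) (Fin.tail G) K)
        (doubleRow (Fin.tail F') (Fin.tail G') K') :=
      ih (fun i => hF i.succ) (fun i => hG i.succ)
    exact ((hF 0).mul_right h_tail).mul_right (hG 0)

theorem transpose_doubleRow {n : Type*} [Fintype n] [DecidableEq n] [CommSemiring A]
    (F G : Fin N → Matrix n n A) (K : Matrix n n A) :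
    (doubleRow F G K).transpose =
      doubleRow (fun i => (G i).transpose) (fun i => (F i).transpose) K.transpose := by
  simp [doubleRow, Matrix.transpose_list_prod, List.map_ofFn, Function.comp_def, mul_assoc]

end DoubleRow

theorem eq_mul_mul_inv_of_semiconjBy {n A : Type*} [Fintype n] [DecidableEq n] [CommRing A]
    {S X Y : Matrix n n A} (hS : IsUnit S.det) (h : SemiconjBy S X Y) : Y = S * X * S⁻¹ := by
  rw [h.eq, Matrix.mul_nonsing_inv_cancel_right S Y hS]

/-- The second Pauli matrix divided by `i`, so that its entries make sense in every ring. -/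
local notation "σ₂" => (!![0, -1; 1, 0] : Matrix (Fin 2) (Fin 2) _)

/-- The third Pauli matrix. -/
local notation "σ₃" => (!![1, 0; 0, -1] : Matrix (Fin 2) (Fin 2) _)

section Pauli

variable {A : Type*} [Ring A]

theorem semiconjBy_sigma3_of (a b c d : A) :
    SemiconjBy σ₃ !![a, b; c, d] !![a, -b; -c, d] := by
  simp [SemiconjBy]

theorem semiconjBy_sigma2_of (a b c d : A) :
    SemiconjBy σ₂ !![a, b; c, d] !![d, -c; -b, a] := by
  simp [SemiconjBy]

end Pauli

section Monodromy

variable {R : Type} [CommRing R]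

theorem semiconjBy_sigma3_lax (e f k kinv : R) (u v : LaurentPolynomial R) :
    SemiconjBy σ₃ (-lax e f k kinv u v) (lax e f k kinv (-u) (-v)) := by
  convert semiconjBy_sigma3_of (-(u * C k - v * C kinv)) (-C e) (-C f) (-(u * C kinv - v * C k))
    using 1
  · simp [lax]
  · simp [lax, neg_add_eq_sub]

theorem semiconjBy_sigma2_lax (e f k kinv : R) (u v : LaurentPolynomial R) :
    SemiconjBy σ₂ (-lax e f k kinv u v) (lax e f k kinv v u).transpose := by
  convert semiconjBy_sigma2_of (-(u * C k - v * C kinv)) (-C e) (-C f) (-(u * C kinv - v * C k))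
    using 1
  · simp [lax]
  · simp [lax, ← Matrix.ext_iff]

variable [Algebra ℂ R]

theorem semiconjBy_sigma3_refK (ξ : ℂ) (u v : LaurentPolynomial R) :
    SemiconjBy σ₃ (-refK ξ u v) (refK ξ (-u) (-v)) := by
  convert semiconjBy_sigma3_of ((-refK ξ u v) 0 0) 0 0 ((-refK ξ u v) 1 1) using 1
  · simp [refK]
  · simp [refK, neg_add_eq_sub]

theorem semiconjBy_sigma2_refK (ξ : ℂ) (u v : LaurentPolynomial R) :
    SemiconjBy σ₂ (refK ξ u v) (refK ξ v u).transpose := by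
  convert semiconjBy_sigma2_of (refK ξ u v 0 0) 0 0 (refK ξ u v 1 1) using 1
  · simp [refK]
  · simp [refK, ← Matrix.ext_iff]

variable {N : ℕ} (e f k kinv : Fin N → R) (ξ : ℂ) (a : Fin N → ℂ) (u v : LaurentPolynomial R)

theorem thatGen_eq_doubleRow : thatGen N e f k kinv ξ a u v =
    doubleRow
      (fun i => lax (e i) (f i) (k i) (kinv i)
        (algebraMap ℂ (LaurentPolynomial R) (a i) * u)
        (algebraMap ℂ (LaurentPolynomial R) (a i)⁻¹ * v))
      (fun i => lax (e i) (f i) (k i) (kinv i)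
        (algebraMap ℂ (LaurentPolynomial R) (a i)⁻¹ * u)
        (algebraMap ℂ (LaurentPolynomial R) (a i) * v))
      (refK ξ u v) :=
  rfl

theorem semiconjBy_sigma3_thatGen :
    SemiconjBy σ₃ (-thatGen N e f k kinv ξ a u v) (thatGen N e f k kinv ξ a (-u) (-v)) := by
  simp only [thatGen_eq_doubleRow, mul_neg]
  rw [← doubleRow_neg_right, ← doubleRow_neg_neg]
  exact semiconjBy_doubleRow (fun i => semiconjBy_sigma3_lax ..)
    (fun i => semiconjBy_sigma3_lax ..) (semiconjBy_sigma3_refK ξ u v)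

theorem semiconjBy_sigma2_thatGen :
    SemiconjBy σ₂ (thatGen N e f k kinv ξ a u v) (thatGen N e f k kinv ξ a v u).transpose := by
  rw [thatGen_eq_doubleRow, thatGen_eq_doubleRow, transpose_doubleRow, ← doubleRow_neg_neg]
  exact semiconjBy_doubleRow (fun i => semiconjBy_sigma2_lax ..)
    (fun i => semiconjBy_sigma2_lax ..) (semiconjBy_sigma2_refK ξ u v)

end Monodromy

/-- the symmetries `T̂(−z) = −σ₃ T̂(z) σ₃⁻¹` and `T̂(z⁻¹)ᵗ = σ₂ T̂(z) σ₂⁻¹`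
of the reflection monodromy matrix, where `σ₂ = [[0,−1],[1,0]]`, `σ₃ = [[1,0],[0,−1]]`. -/
theorem reflection_monodromy_symmetries (R : Type) [CommRing R] [Algebra ℂ R]
    (N : ℕ) (hN : 1 ≤ N) (e f k kinv : Fin N → R) (hk : ∀ i, k i * kinv i = 1)
    (ξ : ℂ) (hξ : ξ ≠ 0) (a : Fin N → ℂ) (ha : ∀ i, a i ≠ 0) :
    thatGen N e f k kinv ξ a (-(T 1)) (-(T (-1)))
        = -((!![1, 0; 0, -1] : Matrix (Fin 2) (Fin 2) (LaurentPolynomial R))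
            * That N e f k kinv ξ a
            * (!![1, 0; 0, -1] : Matrix (Fin 2) (Fin 2) (LaurentPolynomial R))⁻¹) ∧
    (thatGen N e f k kinv ξ a (T (-1)) (T 1)).transpose
        = (!![0, -1; 1, 0] : Matrix (Fin 2) (Fin 2) (LaurentPolynomial R))
            * That N e f k kinv ξ a
            * (!![0, -1; 1, 0] : Matrix (Fin 2) (Fin 2) (LaurentPolynomial R))⁻¹ := by
  have det_sigma3 : IsUnit (σ₃ : Matrix (Fin 2) (Fin 2) (LaurentPolynomial R)).det := by
    simp [Matrix.det_fin_two_of]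
  have det_sigma2 : IsUnit (σ₂ : Matrix (Fin 2) (Fin 2) (LaurentPolynomial R)).det := by
    simp [Matrix.det_fin_two_of]
  rw [That]
  constructor
  · rw [← Matrix.neg_mul, ← Matrix.mul_neg]
    exact eq_mul_mul_inv_of_semiconjBy det_sigma3 (semiconjBy_sigma3_thatGen ..)
  · exact eq_mul_mul_inv_of_semiconjBy det_sigma2 (semiconjBy_sigma2_thatGen ..)

end
end

section
/- Let T̂(z) = [[Â(z), B̂(z)],[Ĉ(z), D̂(z)]] be the N-site reflection monodromy matrix. Then the entries satisfy: Â(z⁻¹) = D̂(z), B̂(z⁻¹) = −B̂(z), Ĉ(z⁻¹) = −Ĉ(z), and Â(−z) = −Â(z), B̂(−z) = B̂(z), Ĉ(−z) = Ĉ(z), D̂(−z) = −D̂(z). -/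
open LaurentPolynomial

noncomputable section

/-!
Writing `σ = diag(1, -1)`, the Lax matrices satisfy `L(u⁻¹) = -adj L(u)` and `σ L(u) = -L(-u) σ`,
while `K(z⁻¹) = adj K(z)` and `σ K(z) = -K(-z) σ`. The adjugate reverses products, and `z ↦ z⁻¹`
turns the left and right factors of `T̂` at each site into minus the adjugates of each other; these
signs cancel in pairs, so `T̂(z⁻¹) = adj T̂(z)`. Since `T̂` has an odd number `2N + 1` of factors,
`σ T̂(z) = -T̂(-z) σ`.
-/

theorem semiconjBy_neg_mul_mul {M : Type*} [Semigroup M] [HasDistribNeg M]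
    {s x y z x' y' z' : M} (hx : SemiconjBy s x (-x')) (hy : SemiconjBy s y (-y'))
    (hz : SemiconjBy s z (-z')) : SemiconjBy s (x * y * z) (-(x' * y' * z')) := by
  simpa only [neg_mul, mul_neg, neg_neg] using (hx.mul_right hy).mul_right hz

section PauliZ

/-- The Pauli matrix `σᶻ`. Intertwining `A` and `-B` by it encodes that `B` is `A` with its
diagonal negated, which is how the Lax matrices behave under `z ↦ -z`. -/
def pauliZ (S : Type*) [Ring S] : Matrix (Fin 2) (Fin 2) S :=
  !![1, 0; 0, -1]

variable {S : Type*} [Ring S]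

theorem pauliZ_mul (A : Matrix (Fin 2) (Fin 2) S) :
    pauliZ S * A = !![A 0 0, A 0 1; -A 1 0, -A 1 1] := by
  conv_lhs => rw [pauliZ, A.eta_fin_two, Matrix.mul_fin_two]
  simp

theorem mul_pauliZ (A : Matrix (Fin 2) (Fin 2) S) :
    A * pauliZ S = !![A 0 0, -A 0 1; A 1 0, -A 1 1] := by
  conv_lhs => rw [pauliZ, A.eta_fin_two, Matrix.mul_fin_two]
  simp

theorem semiconjBy_pauliZ_neg_iff {A B : Matrix (Fin 2) (Fin 2) S} :
    SemiconjBy (pauliZ S) A (-B) ↔ B = !![-A 0 0, A 0 1; A 1 0, -A 1 1] := by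
  rw [SemiconjBy, pauliZ_mul, mul_pauliZ]
  simp [← Matrix.ext_iff, Fin.forall_fin_two, ← neg_eq_iff_eq_neg (a := A 0 0),
    eq_comm (a := B _ _)]

end PauliZ

section ReflectionMonodromy

variable {R : Type} [CommRing R]

theorem lax_swap (e f k kinv : R) (u v : LaurentPolynomial R) :
    lax e f k kinv v u = -(lax e f k kinv u v).adjugate := by
  simp [lax, Matrix.adjugate_fin_two_of]

theorem semiconjBy_pauliZ_lax (e f k kinv : R) (u v : LaurentPolynomial R) :
    SemiconjBy (pauliZ _) (lax e f k kinv u v) (-lax e f k kinv (-u) (-v)) := by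
  rw [semiconjBy_pauliZ_neg_iff]
  simp [lax, neg_add_eq_sub]

variable [Algebra ℂ R]

theorem refK_swap (ξ : ℂ) (u v : LaurentPolynomial R) :
    refK ξ v u = (refK ξ u v).adjugate := by
  simp [refK, Matrix.adjugate_fin_two_of]

theorem semiconjBy_pauliZ_refK (ξ : ℂ) (u v : LaurentPolynomial R) :
    SemiconjBy (pauliZ _) (refK ξ u v) (-refK ξ (-u) (-v)) := by
  rw [semiconjBy_pauliZ_neg_iff]
  simp [refK, neg_add_eq_sub]

theorem thatGen_zero (e f k kinv : Fin 0 → R) (ξ : ℂ) (a : Fin 0 → ℂ)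
    (u v : LaurentPolynomial R) : thatGen 0 e f k kinv ξ a u v = refK ξ u v := by
  simp [thatGen]

theorem thatGen_succ (N : ℕ) (e f k kinv : Fin (N + 1) → R) (ξ : ℂ) (a : Fin (N + 1) → ℂ)
    (u v : LaurentPolynomial R) :
    thatGen (N + 1) e f k kinv ξ a u v =
      lax (e 0) (f 0) (k 0) (kinv 0) (algebraMap ℂ _ (a 0) * u) (algebraMap ℂ _ (a 0)⁻¹ * v) *
      thatGen N (Fin.tail e) (Fin.tail f) (Fin.tail k) (Fin.tail kinv) ξ (Fin.tail a) u v *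
      lax (e 0) (f 0) (k 0) (kinv 0) (algebraMap ℂ _ (a 0)⁻¹ * u) (algebraMap ℂ _ (a 0) * v) := by
  simp only [thatGen, Fin.tail, List.ofFn_succ, List.prod_cons, List.reverse_cons,
    List.prod_append, List.prod_nil, mul_one, Matrix.mul_assoc]

theorem thatGen_swap (N : ℕ) (e f k kinv : Fin N → R) (ξ : ℂ) (a : Fin N → ℂ)
    (u v : LaurentPolynomial R) :
    thatGen N e f k kinv ξ a v u = (thatGen N e f k kinv ξ a u v).adjugate := by
  induction N with
  | zero => rw [thatGen_zero, thatGen_zero, refK_swap]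
  | succ N ih =>
    rw [thatGen_succ, thatGen_succ, ih, lax_swap _ _ _ _ (_ * u), lax_swap _ _ _ _ (_ * u),
      Matrix.adjugate_mul_distrib, Matrix.adjugate_mul_distrib, neg_mul, neg_mul_neg, mul_assoc]

theorem semiconjBy_pauliZ_thatGen (N : ℕ) (e f k kinv : Fin N → R) (ξ : ℂ) (a : Fin N → ℂ)
    (u v : LaurentPolynomial R) :
    SemiconjBy (pauliZ _) (thatGen N e f k kinv ξ a u v)
      (-thatGen N e f k kinv ξ a (-u) (-v)) := by
  induction N with
  | zero => simpa only [thatGen_zero] using semiconjBy_pauliZ_refK ξ u v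
  | succ N ih =>
    rw [thatGen_succ, thatGen_succ]
    simp only [mul_neg]
    exact semiconjBy_neg_mul_mul (semiconjBy_pauliZ_lax ..) (ih ..) (semiconjBy_pauliZ_lax ..)

theorem thatGen_neg (N : ℕ) (e f k kinv : Fin N → R) (ξ : ℂ) (a : Fin N → ℂ)
    (u v : LaurentPolynomial R) :
    letI M := thatGen N e f k kinv ξ a u v
    thatGen N e f k kinv ξ a (-u) (-v) = !![-M 0 0, M 0 1; M 1 0, -M 1 1] :=
  semiconjBy_pauliZ_neg_iff.mp (semiconjBy_pauliZ_thatGen N e f k kinv ξ a u v)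

end ReflectionMonodromy

/-- the symmetries of the entries `T̂(z) = [[Â(z), B̂(z)],[Ĉ(z), D̂(z)]]` of the
reflection monodromy matrix: `Â(z⁻¹) = D̂(z)`, `B̂(z⁻¹) = −B̂(z)`, `Ĉ(z⁻¹) = −Ĉ(z)`, and
`Â(−z) = −Â(z)`, `B̂(−z) = B̂(z)`, `Ĉ(−z) = Ĉ(z)`, `D̂(−z) = −D̂(z)`. -/
theorem reflection_monodromy_entry_symmetries (R : Type) [CommRing R] [Algebra ℂ R]
    (N : ℕ) (hN : 1 ≤ N) (e f k kinv : Fin N → R) (hk : ∀ i, k i * kinv i = 1)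
    (ξ : ℂ) (hξ : ξ ≠ 0) (a : Fin N → ℂ) (ha : ∀ i, a i ≠ 0) :
    letI Tz := thatGen N e f k kinv ξ a (T 1) (T (-1))
    letI Tzinv := thatGen N e f k kinv ξ a (T (-1)) (T 1)
    letI Tnegz := thatGen N e f k kinv ξ a (-(T 1)) (-(T (-1)))
    Tzinv 0 0 = Tz 1 1 ∧
    Tzinv 0 1 = -(Tz 0 1) ∧
    Tzinv 1 0 = -(Tz 1 0) ∧
    Tnegz 0 0 = -(Tz 0 0) ∧
    Tnegz 0 1 = Tz 0 1 ∧
    Tnegz 1 0 = Tz 1 0 ∧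
    Tnegz 1 1 = -(Tz 1 1) := by
  rw [thatGen_swap, Matrix.adjugate_fin_two, thatGen_neg]
  exact ⟨rfl, rfl, rfl, rfl, rfl, rfl, rfl⟩

end
end

section
/- (Log-canonical bracket of the asymptotic coordinates, part of Proposition 4.1.) Let R be a commutative ℂ-algebra with elements e₁,…,e_N, f₁,…,f_N, units k₁,…,k_N, nonzero complex scalars ξ, a₁,…,a_N, and a Poisson bracket satisfying the site-wise relations {kᵢ,eᵢ} = kᵢeᵢ, {kᵢ,fᵢ} = −kᵢfᵢ, {eᵢ,fᵢ} = 2(kᵢ² − kᵢ⁻²), with all brackets between generators at distinct sites and among the kᵢ vanishing. Define P = ξ·Π_{j=1}^{N} k_j² and Q = Σ_{j=1}^{N} f_j·( ξ(k_j/a_j)·Π_{i>j} k_i² − ξ⁻¹(a_j/k_j)·Π_{i>j} k_i⁻² ). Then {Q, P} = 2QP. -/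
noncomputable section

/-- A Poisson bracket on a commutative `ℂ`-algebra `R`: a `ℂ`-bilinear, antisymmetric map
satisfying the Jacobi identity and the Leibniz rule in each argument. -/
structure PoissonBracket (R : Type) [CommRing R] [Algebra ℂ R] where
  bracket : R → R → R
  add_left : ∀ a b c : R, bracket (a + b) c = bracket a c + bracket b c
  smul_left : ∀ (s : ℂ) (a b : R), bracket (s • a) b = s • bracket a b
  add_right : ∀ a b c : R, bracket a (b + c) = bracket a b + bracket a c
  smul_right : ∀ (s : ℂ) (a b : R), bracket a (s • b) = s • bracket a b
  antisymm : ∀ a b : R, bracket a b = -bracket b a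
  jacobi : ∀ a b c : R,
    bracket a (bracket b c) + bracket b (bracket c a) + bracket c (bracket a b) = 0
  leibniz_right : ∀ a b c : R, bracket a (b * c) = bracket a b * c + b * bracket a c
  leibniz_left : ∀ a b c : R, bracket (a * b) c = bracket a c * b + a * bracket b c

/-!
Every `k i` is an eigenvector of `{·, f j}`, with eigenvalue `-f j` if `i = j` and `0` otherwise.
Under a derivation eigenvalues add along products, so
`{∏ i, k i ^ 2, f j} = -2 * f j * ∏ i, k i ^ 2`: every `f j` has weight `2` under the bracket with
the deformed total spin. The coefficients of the `f j` in `Q` lie in the Poisson-commutative algebra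
generated by the `k i` and their inverses, so they have weight `0`, and `Q` inherits the weight `2`.
-/

section Derivation

/-- The subalgebra of constants of a derivation, that is, its kernel. -/
def derivationKernel {S A M : Type*} [CommSemiring S] [CommSemiring A] [AddCommMonoid M]
    [Algebra S A] [Module A M] [Module S M] (D : Derivation S A M) : Subalgebra S A where
  carrier := {a | D a = 0}
  mul_mem' {a b} (ha : D a = 0) (hb : D b = 0) := by
    simp only [Set.mem_ofPred_eq, D.leibniz, ha, hb, smul_zero, add_zero]
  add_mem' {a b} (ha : D a = 0) (hb : D b = 0) := by
    simp only [Set.mem_ofPred_eq, map_add, ha, hb, add_zero]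
  algebraMap_mem' := D.map_algebraMap

theorem mem_derivationKernel_of_mul_eq_one {S A M : Type*} [CommRing S] [CommRing A]
    [AddCommGroup M] [Algebra S A] [Module A M] [Module S M] {D : Derivation S A M} {a b : A}
    (hab : a * b = 1) (ha : a ∈ derivationKernel D) : b ∈ derivationKernel D := by
  have hD : D a = 0 := ha
  have hba : b * a = 1 := by rw [mul_comm, hab]
  change D b = 0
  rw [D.leibniz_of_mul_eq_one hba, hD, smul_zero]

variable {S A : Type*} [CommSemiring S] [CommSemiring A] [Algebra S A]

theorem derivation_prod_of_eigenvectors {ι : Type*} (D : Derivation S A A) {s : Finset ι}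
    {g w : ι → A} (hg : ∀ i ∈ s, D (g i) = w i * g i) :
    D (∏ i ∈ s, g i) = (∑ i ∈ s, w i) * ∏ i ∈ s, g i := by
  classical
  induction s using Finset.induction_on with
  | empty => simp only [Finset.prod_empty, Finset.sum_empty, D.map_one_eq_zero, zero_mul]
  | insert i s hi ih =>
    rw [Finset.prod_insert hi, Finset.sum_insert hi, D.leibniz, hg i (Finset.mem_insert_self i s),
      ih fun j hj => hg j (Finset.mem_insert_of_mem hj), smul_eq_mul, smul_eq_mul]
    ring

theorem derivation_pow_of_eigenvector (D : Derivation S A A) {a w : A} (ha : D a = w * a) (n : ℕ) :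
    D (a ^ n) = n * w * a ^ n := by
  have h := derivation_prod_of_eigenvectors D (s := Finset.range n) fun _ _ => ha
  rwa [Finset.prod_const, Finset.sum_const, Finset.card_range, nsmul_eq_mul] at h

end Derivation

section CartanCoeff

variable {F R ι : Type*} [Field F] [CommRing R] [Algebra F R] [Fintype ι] [LT ι] [DecidableLT ι]

/-- The coefficient of `f j` in `Q`, a Laurent polynomial in the generators `k i`, whose inverses
are passed as `kinv i`. -/
def cartanCoeff (ξ : F) (a : ι → F) (k kinv : ι → R) (j : ι) : R :=
  algebraMap F R ξ * (k j * algebraMap F R (a j)⁻¹)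
      * ∏ i ∈ Finset.univ.filter (fun i => j < i), (k i) ^ 2
    - algebraMap F R ξ⁻¹ * (algebraMap F R (a j) * kinv j)
      * ∏ i ∈ Finset.univ.filter (fun i => j < i), (kinv i) ^ 2

theorem cartanCoeff_mem (ξ : F) (a : ι → F) {k kinv : ι → R} {A : Subalgebra F R}
    (hk : ∀ i, k i ∈ A) (hkinv : ∀ i, kinv i ∈ A) (j : ι) : cartanCoeff ξ a k kinv j ∈ A :=
  have hscalar (s : F) : algebraMap F R s ∈ A := A.algebraMap_mem s
  sub_mem
    (mul_mem (mul_mem (hscalar _) (mul_mem (hk j) (hscalar _)))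
      (prod_mem fun i _ => pow_mem (hk i) 2))
    (mul_mem (mul_mem (hscalar _) (mul_mem (hscalar _) (hkinv j)))
      (prod_mem fun i _ => pow_mem (hkinv i) 2))

end CartanCoeff

namespace PoissonBracket

variable {R : Type} [CommRing R] [Algebra ℂ R] (P : PoissonBracket R)

/-- The Hamiltonian vector field `{·, h}` of `h`, as a derivation; the Hamiltonian is placed in the
second argument. -/
def hamiltonianDerivation (h : R) : Derivation ℂ R R :=
  Derivation.mk'
    { toFun := fun a => P.bracket a h
      map_add' := fun a b => P.add_left a b h
      map_smul' := fun s a => P.smul_left s a h }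
    fun a b => by
      change P.bracket (a * b) h = a * P.bracket b h + b * P.bracket a h
      rw [P.leibniz_left]
      ring

theorem bracket_eq_zero_comm {a b : R} : P.bracket a b = 0 ↔ P.bracket b a = 0 := by
  rw [P.antisymm, neg_eq_zero]

variable {ι : Type*} [Fintype ι] (ξ : ℂ) {k f : ι → R}

theorem bracket_lowering_totalSpin (hkf : ∀ i, P.bracket (k i) (f i) = -(k i * f i))
    (hkf_ne : ∀ i j, i ≠ j → P.bracket (k i) (f j) = 0) (j : ι) :
    P.bracket (f j) (algebraMap ℂ R ξ * ∏ i, k i ^ 2)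
      = 2 * f j * (algebraMap ℂ R ξ * ∏ i, k i ^ 2) := by
  classical
  let D := P.hamiltonianDerivation (f j)
  have hk (i : ι) : D (k i) = (if i = j then -f j else 0) * k i := by
    change P.bracket (k i) (f j) = _
    split_ifs with hij
    · rw [hij, hkf]
      ring
    · rw [hkf_ne i j hij, zero_mul]
  have hprod : D (∏ i, k i ^ 2) = -(2 * f j) * ∏ i, k i ^ 2 := by
    rw [derivation_prod_of_eigenvectors D fun i _ => derivation_pow_of_eigenvector D (hk i) 2,
      ← Finset.mul_sum, Fintype.sum_ite_eq' j, mul_neg, Nat.cast_ofNat]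
  calc P.bracket (f j) (algebraMap ℂ R ξ * ∏ i, k i ^ 2)
      = -D (algebraMap ℂ R ξ * ∏ i, k i ^ 2) := P.antisymm _ _
    _ = -(algebraMap ℂ R ξ * D (∏ i, k i ^ 2)) := by
        rw [D.leibniz, D.map_algebraMap, smul_zero, add_zero, smul_eq_mul]
    _ = 2 * f j * (algebraMap ℂ R ξ * ∏ i, k i ^ 2) := by
        rw [hprod]
        ring

theorem bracket_totalSpin_eq_zero {x : R} (hx : ∀ i, P.bracket x (k i) = 0) :
    P.bracket x (algebraMap ℂ R ξ * ∏ i, k i ^ 2) = 0 := by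
  have hk (i : ι) : k i ∈ derivationKernel (P.hamiltonianDerivation x) :=
    P.bracket_eq_zero_comm.mp (hx i)
  exact P.bracket_eq_zero_comm.mp <|
    mul_mem (Subalgebra.algebraMap_mem _ ξ) (prod_mem fun i _ => pow_mem (hk i) 2)

theorem bracket_cartanCoeff_eq_zero [LT ι] [DecidableLT ι] (a : ι → ℂ) {kinv : ι → R}
    (hk : ∀ i, k i * kinv i = 1) (hkk : ∀ i j, P.bracket (k i) (k j) = 0) (j i : ι) :
    P.bracket (cartanCoeff ξ a k kinv j) (k i) = 0 := by
  have hk_mem (l : ι) : k l ∈ derivationKernel (P.hamiltonianDerivation (k i)) := hkk l i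
  exact cartanCoeff_mem ξ a hk_mem
    (fun l => mem_derivationKernel_of_mul_eq_one (hk l) (hk_mem l)) j

end PoissonBracket

theorem log_canonical_bracket_QP_general {R : Type} [CommRing R] [Algebra ℂ R]
    (P : PoissonBracket R) {ι : Type*} [Fintype ι] (ξ : ℂ) {k f c : ι → R}
    (hkf : ∀ i, P.bracket (k i) (f i) = -(k i * f i))
    (hkf_ne : ∀ i j, i ≠ j → P.bracket (k i) (f j) = 0)
    (hck : ∀ j i, P.bracket (c j) (k i) = 0) :
    P.bracket (∑ j, f j * c j) (algebraMap ℂ R ξ * ∏ i, k i ^ 2)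
      = 2 * (∑ j, f j * c j) * (algebraMap ℂ R ξ * ∏ i, k i ^ 2) := by
  set Ptot := algebraMap ℂ R ξ * ∏ i, k i ^ 2
  have hf (j : ι) : P.bracket (f j) Ptot = 2 * f j * Ptot :=
    P.bracket_lowering_totalSpin ξ hkf hkf_ne j
  have hc (j : ι) : P.bracket (c j) Ptot = 0 := P.bracket_totalSpin_eq_zero ξ (hck j)
  calc P.bracket (∑ j, f j * c j) Ptot
      = ∑ j, P.bracket (f j * c j) Ptot := map_sum (P.hamiltonianDerivation Ptot) _ _
    _ = ∑ j, 2 * (f j * c j) * Ptot := Finset.sum_congr rfl fun j _ => by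
        rw [P.leibniz_left, hf, hc]
        ring
    _ = 2 * (∑ j, f j * c j) * Ptot := by rw [Finset.mul_sum, Finset.sum_mul]

/-- the log-canonical bracket `{Q, P} = 2QP` of the asymptotic separated
coordinates `P = ξ·Π_j k_j²` and
`Q = Σ_j f_j·(ξ(k_j/a_j)·Π_{i>j} k_i² − ξ⁻¹(a_j/k_j)·Π_{i>j} k_i⁻²)`. -/
theorem log_canonical_bracket_QP (R : Type) [CommRing R] [Algebra ℂ R]
    (P : PoissonBracket R) (N : ℕ) (hN : 1 ≤ N) (e f k kinv : Fin N → R)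
    (ξ : ℂ) (hξ : ξ ≠ 0) (a : Fin N → ℂ) (ha : ∀ i, a i ≠ 0)
    (hk : ∀ i, k i * kinv i = 1)
    (hke : ∀ i, P.bracket (k i) (e i) = k i * e i)
    (hkf : ∀ i, P.bracket (k i) (f i) = -(k i * f i))
    (hef : ∀ i, P.bracket (e i) (f i) = 2 * ((k i) ^ 2 - (kinv i) ^ 2))
    (hdist : ∀ i j, i ≠ j → P.bracket (e i) (e j) = 0 ∧ P.bracket (f i) (f j) = 0 ∧
        P.bracket (e i) (f j) = 0 ∧ P.bracket (k i) (e j) = 0 ∧ P.bracket (k i) (f j) = 0)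
    (hkk : ∀ i j, P.bracket (k i) (k j) = 0) :
    letI Ptot : R := algebraMap ℂ R ξ * ∏ i : Fin N, (k i) ^ 2
    letI Q : R := ∑ j : Fin N, f j *
      (algebraMap ℂ R ξ * (k j * algebraMap ℂ R (a j)⁻¹)
          * ∏ i ∈ Finset.univ.filter (fun i => j < i), (k i) ^ 2
        - algebraMap ℂ R ξ⁻¹ * (algebraMap ℂ R (a j) * kinv j)
          * ∏ i ∈ Finset.univ.filter (fun i => j < i), (kinv i) ^ 2)
    P.bracket Q Ptot = 2 * Q * Ptot := by
  exact log_canonical_bracket_QP_general P ξ hkf (fun i j hij => (hdist i j hij).2.2.2.2)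
    (P.bracket_cartanCoeff_eq_zero ξ a hk hkk)

end
end
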